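/- arXiv:2104.15083 — 2 statements merged into one kernel-verified Lean document; each statement's English description precedes it below -/
import Mathlib

section
/- For any two distinct nonempty finite traces u ≠ v over a nonempty set P of propositional variables, there exists an LTLf formula φ such that V(u ⊨ φ) = 1 and V(v ⊨ φ) = 0. -/
/-- Syntax of LTLf formulas over propositional variables `P`:
`φ ::= p | ¬φ | φ ∨ φ | X φ | φ U φ`. -/
inductive LTL (P : Type) : Type
  | atom : P → LTL P
  | neg  : LTL P → LTL P
  | disj : LTL P → LTL P → LTL P
  | next : LTL P → LTL P
  | untl : LTL P → LTL P → LTL P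

open Classical in
/-- The valuation `V(φ, u, i) ∈ {0,1}` of an LTLf formula on a finite trace
`u : List (Set P)` at position `i`. -/
noncomputable def Val {P : Type} : LTL P → List (Set P) → ℕ → ℕ
  | .atom p, u, i => if p ∈ u.getD i ∅ then 1 else 0
  | .neg φ, u, i => 1 - Val φ u i
  | .disj φ ψ, u, i => max (Val φ u i) (Val ψ u i)
  | .next φ, u, i => if i + 1 < u.length ∧ Val φ u (i + 1) = 1 then 1 else 0
  | .untl φ ψ, u, i =>
      if ∃ j, i ≤ j ∧ j < u.length ∧ Val ψ u j = 1 ∧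
          ∀ k, i ≤ k → k < j → Val φ u k = 1 then 1 else 0

/-!
The formula `X^n φ` says at position `0` that position `n` exists and satisfies `φ`. Hence two
traces satisfying the same formulas have the same positions (take for `φ` a tautology, which
costs a propositional variable), and the same letter at each of them (take `φ` atomic). If some
formula is satisfied by exactly one of two traces, it or its negation separates them as required.
-/

section Valuation

variable {P : Type} {φ ψ : LTL P} {u : List (Set P)} {i : ℕ}

theorem val_le_one (φ : LTL P) (u : List (Set P)) (i : ℕ) : Val φ u i ≤ 1 := by
  cases φ with
  | atom | next | untl => simp only [Val]; split_ifs <;> simp only [le_refl, zero_le]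
  | neg => exact Nat.sub_le 1 _
  | disj φ ψ => exact max_le (val_le_one φ u i) (val_le_one ψ u i)

theorem val_eq_zero_iff : Val φ u i = 0 ↔ Val φ u i ≠ 1 := by
  have := val_le_one φ u i
  omega

theorem val_atom_eq_one_iff {p : P} (hi : i < u.length) :
    Val (.atom p) u i = 1 ↔ p ∈ u[i] := by
  simp [Val, hi]

theorem val_neg_eq_one_iff : Val (.neg φ) u i = 1 ↔ Val φ u i ≠ 1 := by
  rw [← val_eq_zero_iff]
  simp only [Val]
  omega

theorem val_disj_eq_one_iff :
    Val (.disj φ ψ) u i = 1 ↔ Val φ u i = 1 ∨ Val ψ u i = 1 := by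
  have hφ := val_le_one φ u i
  have hψ := val_le_one ψ u i
  simp only [Val]
  omega

theorem val_next_eq_one_iff :
    Val (.next φ) u i = 1 ↔ i + 1 < u.length ∧ Val φ u (i + 1) = 1 := by
  simp [Val]

theorem val_disj_neg_self (φ : LTL P) (u : List (Set P)) (i : ℕ) :
    Val (.disj φ (.neg φ)) u i = 1 :=
  val_disj_eq_one_iff.2 <| (em _).imp_right val_neg_eq_one_iff.2

theorem val_iterate_next_eq_one_iff (n : ℕ) (hi : i < u.length) :
    Val (LTL.next^[n] φ) u i = 1 ↔ i + n < u.length ∧ Val φ u (i + n) = 1 := by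
  induction n generalizing φ with
  | zero => simp only [Function.iterate_zero_apply, Nat.add_zero, hi, true_and]
  | succ n ih =>
    rw [Function.iterate_succ_apply, ih, val_next_eq_one_iff, Nat.add_assoc]
    exact and_iff_right_of_imp fun h => (Nat.lt_succ_self _).trans h.1

end Valuation

/-- Two traces are LTLf-equivalent if they satisfy the same formulas, each evaluated at the
initial position. -/
def LTLEquiv {P : Type} (u v : List (Set P)) : Prop :=
  ∀ φ : LTL P, Val φ u 0 = 1 ↔ Val φ v 0 = 1

namespace LTLEquiv

variable {P : Type} {u v : List (Set P)}

theorem exists_separating_of_not (h : ¬ LTLEquiv u v) :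
    ∃ φ : LTL P, Val φ u 0 = 1 ∧ Val φ v 0 = 0 := by
  obtain ⟨φ, hφ⟩ := not_forall.1 h
  by_cases hφu : Val φ u 0 = 1
  · exact ⟨φ, hφu, val_eq_zero_iff.2 fun hφv => hφ (iff_of_true hφu hφv)⟩
  · have hφv : Val φ v 0 = 1 := by_contra fun hφv => hφ (iff_of_false hφu hφv)
    exact ⟨.neg φ, val_neg_eq_one_iff.2 hφu,
      val_eq_zero_iff.2 fun hneg => val_neg_eq_one_iff.1 hneg hφv⟩

theorem val_eq_one_iff (h : LTLEquiv u v) (hu : u ≠ []) (hv : v ≠ []) (φ : LTL P) (n : ℕ) :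
    n < u.length ∧ Val φ u n = 1 ↔ n < v.length ∧ Val φ v n = 1 := by
  simpa only [val_iterate_next_eq_one_iff n (List.length_pos_iff.2 hu),
    val_iterate_next_eq_one_iff n (List.length_pos_iff.2 hv), Nat.zero_add]
    using h (LTL.next^[n] φ)

theorem length_eq [Nonempty P] (h : LTLEquiv u v) (hu : u ≠ []) (hv : v ≠ []) :
    u.length = v.length := by
  obtain ⟨p⟩ := ‹Nonempty P›
  refine eq_of_forall_lt_iff fun n => ?_
  simpa only [val_disj_neg_self, and_true]
    using h.val_eq_one_iff hu hv (.disj (.atom p) (.neg (.atom p))) n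

theorem getElem_eq (h : LTLEquiv u v) {n : ℕ} (hnu : n < u.length) (hnv : n < v.length) :
    u[n] = v[n] := by
  have hu : u ≠ [] := List.ne_nil_of_length_pos (Nat.zero_lt_of_lt hnu)
  have hv : v ≠ [] := List.ne_nil_of_length_pos (Nat.zero_lt_of_lt hnv)
  ext p
  simpa only [hnu, hnv, true_and, val_atom_eq_one_iff]
    using h.val_eq_one_iff hu hv (.atom p) n

theorem eq [Nonempty P] (h : LTLEquiv u v) (hu : u ≠ []) (hv : v ≠ []) : u = v :=
  List.ext_getElem (h.length_eq hu hv) fun _ hnu hnv => h.getElem_eq hnu hnv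

end LTLEquiv

/-- Any two distinct nonempty traces over a nonempty set `P` can be separated
by an LTLf formula. -/
theorem separating_formula_of_ne {P : Type} [Nonempty P]
    (u v : List (Set P)) (hu : u ≠ []) (hv : v ≠ []) (huv : u ≠ v) :
    ∃ φ : LTL P, Val φ u 0 = 1 ∧ Val φ v 0 = 0 :=
  LTLEquiv.exists_separating_of_not fun h => huv (h.eq hu hv)
end

section
/- For every sample S over a nonempty set P of propositional variables (all traces of S being nonempty), there exists an LTLf formula φ that perfectly classifies S, i.e., V(u ⊨ φ) = b for every (u,b) ∈ S; equivalently, l(S,φ) = 0. -/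
/-- The loss `l(S,φ) = (1/|S|) · Σ_{(u,b)∈S} |V(u⊨φ) − b|`. -/
noncomputable def loss {P : Type} (S : Finset (List (Set P) × ℕ)) (φ : LTL P) : ℝ :=
  (∑ x ∈ S, |(Val φ x.1 0 : ℝ) - (x.2 : ℝ)|) / (S.card : ℝ)

/-!
The languages of LTLf formulas form a Boolean subalgebra, so to realise every labelling of finitely
many traces it is enough to tell any two distinct nonempty traces apart. For this, `Xⁿ ⊤` holds
on a nonempty trace iff it is longer than `n`, and `Xⁿ p` reads off whether `p` lies in the letter
at position `n`.
-/

section FiniteSeparation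

variable {α : Type*} {L : BooleanSubalgebra (Set α)} {T : Finset α}

theorem exists_mem_booleanSubalgebra_forall_mem_iff_eq (x : α)
    (hsep : ∀ y ∈ T, y ≠ x → ∃ s ∈ L, ¬(y ∈ s ↔ x ∈ s)) :
    ∃ s ∈ L, ∀ y ∈ T, (y ∈ s ↔ y = x) := by
  classical
  have separate : ∀ y ∈ T.erase x, ∃ s ∈ L, x ∈ s ∧ y ∉ s := by
    intro y hy
    obtain ⟨hyx, hyT⟩ := Finset.mem_erase.1 hy
    obtain ⟨s, hs, hne⟩ := hsep y hyT hyx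
    by_cases hx : x ∈ s
    · exact ⟨s, hs, hx, fun hy ↦ hne (iff_of_true hy hx)⟩
    · exact ⟨sᶜ, L.compl_mem hs, hx, fun hy ↦ hne (iff_of_false hy hx)⟩
  choose! s hsL hxs hys using separate
  refine ⟨(T.erase x).inf s, Finset.inf_mem _ L.top_mem (fun _ ha _ hb ↦ L.inf_mem ha hb) _ _ hsL,
    fun y hy ↦ ?_⟩
  rw [Finset.inf_set_eq_iInter, Set.mem_iInter₂]
  constructor
  · intro hmem
    by_contra hyx
    have hy' := Finset.mem_erase.2 ⟨hyx, hy⟩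
    exact hys y hy' (hmem y hy')
  · rintro rfl
    exact hxs

theorem exists_mem_booleanSubalgebra_forall_mem_iff
    (hsep : (T : Set α).Pairwise fun x y ↦ ∃ s ∈ L, ¬(x ∈ s ↔ y ∈ s)) (A : Set α) :
    ∃ s ∈ L, ∀ x ∈ T, (x ∈ s ↔ x ∈ A) := by
  classical
  have isolate : ∀ x ∈ T, ∃ s ∈ L, ∀ y ∈ T, (y ∈ s ↔ y = x) := fun x hx ↦
    exists_mem_booleanSubalgebra_forall_mem_iff_eq x fun y hy hyx ↦ hsep hy hx hyx
  choose! s hsL hs using isolate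
  refine ⟨(T.filter (· ∈ A)).sup s, Finset.sup_mem _ L.bot_mem (fun _ ha _ hb ↦ L.sup_mem ha hb) _ _
    fun x hx ↦ hsL x (Finset.mem_filter.1 hx).1, fun x hx ↦ ?_⟩
  simp only [Finset.sup_set_eq_biUnion, Set.mem_iUnion₂, Finset.mem_filter, exists_prop]
  constructor
  · rintro ⟨y, ⟨hyT, hyA⟩, hxy⟩
    rwa [(hs y hyT x hx).1 hxy]
  · intro hxA
    exact ⟨x, ⟨hx, hxA⟩, (hs x hx x hx).2 rfl⟩

end FiniteSeparation

namespace LTL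

variable {P : Type} {u v : List (Set P)} {i : ℕ}

theorem val_le_one (φ : LTL P) (u : List (Set P)) (i : ℕ) : Val φ u i ≤ 1 := by
  induction φ with
  | atom p => rw [Val]; split_ifs <;> simp
  | neg φ _ => exact Nat.sub_le _ _
  | disj φ ψ ihφ ihψ => exact max_le ihφ ihψ
  | next φ _ => rw [Val]; split_ifs <;> simp
  | untl φ ψ _ _ => rw [Val]; split_ifs <;> simp

theorem val_atom_eq_one_iff {p : P} : Val (.atom p) u i = 1 ↔ p ∈ u.getD i ∅ := by
  simp [Val]

theorem val_neg_eq_one_iff {φ : LTL P} : Val (.neg φ) u i = 1 ↔ ¬Val φ u i = 1 := by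
  have := val_le_one φ u i
  rw [Val]
  omega

theorem val_disj_eq_one_iff {φ ψ : LTL P} :
    Val (.disj φ ψ) u i = 1 ↔ Val φ u i = 1 ∨ Val ψ u i = 1 := by
  have := val_le_one φ u i
  have := val_le_one ψ u i
  rw [Val]
  omega

theorem val_next_eq_one_iff {φ : LTL P} :
    Val (.next φ) u i = 1 ↔ i + 1 < u.length ∧ Val φ u (i + 1) = 1 := by
  simp [Val]

theorem val_iterate_next_eq_one_iff {φ : LTL P} {n : ℕ} (hi : i < u.length) :
    Val (next^[n] φ) u i = 1 ↔ i + n < u.length ∧ Val φ u (i + n) = 1 := by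
  induction n generalizing φ with
  | zero => simp [hi]
  | succ n ih =>
    rw [Function.iterate_succ_apply, ih, val_next_eq_one_iff, ← add_assoc]
    constructor
    · exact And.right
    · intro h
      exact ⟨by omega, h⟩

/-- The tautology `p ∨ ¬p`, standing for `⊤`, which is not part of the syntax. -/
def verum (p : P) : LTL P := .disj (.atom p) (.neg (.atom p))

theorem val_verum (p : P) (u : List (Set P)) (i : ℕ) : Val (verum p) u i = 1 := by
  rw [verum, val_disj_eq_one_iff, val_neg_eq_one_iff]
  exact em _

/-- The language of `φ`: the set of traces `u` with `u ⊨ φ`. -/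
def language (φ : LTL P) : Set (List (Set P)) := {u | Val φ u 0 = 1}

theorem mem_language {φ : LTL P} : u ∈ language φ ↔ Val φ u 0 = 1 := Iff.rfl

theorem language_neg (φ : LTL P) : language (.neg φ) = (language φ)ᶜ :=
  Set.ext fun _ ↦ val_neg_eq_one_iff

theorem language_disj (φ ψ : LTL P) : language (.disj φ ψ) = language φ ∪ language ψ :=
  Set.ext fun _ ↦ val_disj_eq_one_iff

theorem language_verum (p : P) : language (verum p) = Set.univ :=
  Set.eq_univ_of_forall fun u ↦ val_verum p u 0

/-- The Boolean subalgebra of LTLf-definable trace languages, which lets finite separation in set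
algebras be applied to formulas. -/
def definableLanguages (P : Type) [Nonempty P] : BooleanSubalgebra (Set (List (Set P))) where
  carrier := Set.range language
  supClosed' := by
    rintro _ ⟨φ, rfl⟩ _ ⟨ψ, rfl⟩
    exact ⟨.disj φ ψ, language_disj φ ψ⟩
  infClosed' := by
    rintro _ ⟨φ, rfl⟩ _ ⟨ψ, rfl⟩
    refine ⟨.neg (.disj (.neg φ) (.neg ψ)), ?_⟩
    rw [language_neg, language_disj, language_neg, language_neg, Set.compl_union, compl_compl,
      compl_compl]
    rfl
  compl_mem' := by
    rintro _ ⟨φ, rfl⟩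
    exact ⟨.neg φ, language_neg φ⟩
  bot_mem' := by
    obtain ⟨p⟩ := ‹Nonempty P›
    exact ⟨.neg (verum p), by rw [language_neg, language_verum, Set.compl_univ, Set.bot_eq_empty]⟩

variable [Nonempty P]

theorem eq_of_forall_mem_language_iff (hu : u ≠ []) (hv : v ≠ [])
    (h : ∀ φ : LTL P, u ∈ language φ ↔ v ∈ language φ) : u = v := by
  have val_iff (n : ℕ) (φ : LTL P) :
      (n < u.length ∧ Val φ u n = 1) ↔ (n < v.length ∧ Val φ v n = 1) := by
    have hn := h (next^[n] φ)
    rwa [mem_language, mem_language, val_iterate_next_eq_one_iff (List.length_pos_of_ne_nil hu),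
      val_iterate_next_eq_one_iff (List.length_pos_of_ne_nil hv), zero_add] at hn
  have lt_length_iff (n : ℕ) : n < u.length ↔ n < v.length := by
    obtain ⟨p⟩ := ‹Nonempty P›
    simpa only [val_verum, and_true] using val_iff n (verum p)
  have length_eq : u.length = v.length := eq_of_forall_lt_iff lt_length_iff
  refine List.ext_getElem length_eq fun n hnu hnv ↦ Set.ext fun p ↦ ?_
  simpa [val_atom_eq_one_iff, hnu, hnv] using val_iff n (.atom p)

theorem exists_forall_mem_language_iff {T : Finset (List (Set P))} (hT : ∀ u ∈ T, u ≠ [])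
    (A : Set (List (Set P))) : ∃ φ : LTL P, ∀ u ∈ T, (u ∈ language φ ↔ u ∈ A) := by
  have hsep : (T : Set (List (Set P))).Pairwise fun u v ↦
      ∃ s ∈ definableLanguages P, ¬(u ∈ s ↔ v ∈ s) := by
    intro u hu v hv huv
    by_contra! hagree
    exact huv <| eq_of_forall_mem_language_iff (hT u hu) (hT v hv) fun φ ↦ hagree _ ⟨φ, rfl⟩
  obtain ⟨_, ⟨φ, rfl⟩, hφ⟩ := exists_mem_booleanSubalgebra_forall_mem_iff hsep A
  exact ⟨φ, hφ⟩

end LTL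

theorem loss_eq_zero_iff {P : Type} {S : Finset (List (Set P) × ℕ)} (hS : S.Nonempty)
    {φ : LTL P} : loss S φ = 0 ↔ ∀ u b, (u, b) ∈ S → Val φ u 0 = b := by
  have hcard : (S.card : ℝ) ≠ 0 := Nat.cast_ne_zero.2 hS.card_ne_zero
  rw [loss, div_eq_zero_iff, or_iff_left hcard,
    Finset.sum_eq_zero_iff_of_nonneg fun _ _ ↦ abs_nonneg _]
  simp only [Prod.forall, abs_eq_zero, sub_eq_zero, Nat.cast_inj]

/-- Every sample (over nonempty `P`, with nonempty traces) admits an LTLf formula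
that classifies it perfectly, i.e. with loss `0`. -/
theorem exists_perfect_classifier {P : Type} [Nonempty P]
    (S : Finset (List (Set P) × ℕ)) (hS : S.Nonempty)
    (hlab : ∀ x ∈ S, x.2 = 0 ∨ x.2 = 1)
    (hfun : ∀ u b₁ b₂, (u, b₁) ∈ S → (u, b₂) ∈ S → b₁ = b₂)
    (hne : ∀ x ∈ S, x.1 ≠ []) :
    ∃ φ : LTL P, (∀ u b, (u, b) ∈ S → Val φ u 0 = b) ∧ loss S φ = 0 := by
  classical
  obtain ⟨φ, hφ⟩ := LTL.exists_forall_mem_language_iff (T := S.image Prod.fst)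
    (Finset.forall_mem_image.2 hne) {u | (u, 1) ∈ S}
  have hval : ∀ u b, (u, b) ∈ S → Val φ u 0 = b := by
    intro u b hub
    have label_iff : (u, 1) ∈ S ↔ b = 1 := ⟨hfun u b 1 hub, fun hb ↦ hb ▸ hub⟩
    have val_iff : Val φ u 0 = 1 ↔ b = 1 :=
      (hφ u (Finset.mem_image_of_mem Prod.fst hub)).trans label_iff
    have hle : Val φ u 0 ≤ 1 := LTL.val_le_one φ u 0
    have hb : b = 0 ∨ b = 1 := hlab (u, b) hub
    omega
  exact ⟨φ, hval, (loss_eq_zero_iff hS).2 hval⟩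
end
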